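/- In dimension n = 2, for the Weyl connection W(g,B) with Christoffel symbols W^σ_{μν} = Γ^σ_{μν}(g) + (1/2)(δ^σ_ν B_μ + δ^σ_μ B_ν − g_{μν} B^σ), the symmetric part of its Ricci tensor satisfies R_{(μν)}(W) = (1/2)(R(g) − D_α B^α)·g_{μν}, where R(g) is the scalar curvature of g and D is the Levi-Civita covariant derivative of g. Consequently R_{(μν)}(W) − (1/2)·𝓡·g_{μν} = 0 identically, with 𝓡 = g^{μν}R_{(μν)}(W) = R(g) − D_α B^α. -/

import Mathlib

open scoped BigOperators

/-- Partial derivative `∂_μ f` in coordinates on `ℝⁿ`. -/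
noncomputable def pd {n : ℕ} (f : (Fin n → ℝ) → ℝ) (μ : Fin n)
    (x : Fin n → ℝ) : ℝ :=
  fderiv ℝ f x (Pi.single μ 1)

/-- Christoffel symbols `Γ^σ_{μν}(g)` of the Levi-Civita connection of `g`. -/
noncomputable def christoffel {n : ℕ}
    (g : (Fin n → ℝ) → Matrix (Fin n) (Fin n) ℝ)
    (x : Fin n → ℝ) (σ μ ν : Fin n) : ℝ :=
  (1 / 2) * ∑ α, (g x)⁻¹ σ α *
    (pd (fun y => g y ν α) μ x + pd (fun y => g y μ α) ν x
      - pd (fun y => g y μ ν) α x)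

/-- Ricci tensor `R_{μσ} = ∂_ν Γ^ν_{μσ} - ∂_σ Γ^ν_{μν}
    + Γ^ν_{αν} Γ^α_{μσ} - Γ^ν_{ασ} Γ^α_{μν}` of a connection `Γ^λ_{μν}`
    (first argument of `Γ x` is the upper index). -/
noncomputable def ricci {n : ℕ}
    (Γ : (Fin n → ℝ) → Fin n → Fin n → Fin n → ℝ)
    (x : Fin n → ℝ) (μ σ : Fin n) : ℝ :=
  ∑ ν, pd (fun y => Γ y ν μ σ) ν x - ∑ ν, pd (fun y => Γ y ν μ ν) σ x
    + ∑ ν, ∑ α, Γ x ν α ν * Γ x α μ σ - ∑ ν, ∑ α, Γ x ν α σ * Γ x α μ ν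

/-- Symmetrized Ricci tensor `R_{(μν)}`. -/
noncomputable def ricciSym {n : ℕ}
    (Γ : (Fin n → ℝ) → Fin n → Fin n → Fin n → ℝ)
    (x : Fin n → ℝ) (μ ν : Fin n) : ℝ :=
  (1 / 2) * (ricci Γ x μ ν + ricci Γ x ν μ)

/-- Scalar curvature `R(g) = g^{μν} R_{μν}(Γ(g))` of a metric `g`. -/
noncomputable def scalarCurv {n : ℕ}
    (g : (Fin n → ℝ) → Matrix (Fin n) (Fin n) ℝ) (x : Fin n → ℝ) : ℝ :=
  ∑ μ, ∑ ν, (g x)⁻¹ μ ν * ricci (christoffel g) x μ ν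

/-- Lowered index `B_μ = g_{μα} B^α`. -/
noncomputable def lowerIdx {n : ℕ}
    (g : (Fin n → ℝ) → Matrix (Fin n) (Fin n) ℝ)
    (B : (Fin n → ℝ) → Fin n → ℝ) (x : Fin n → ℝ) (μ : Fin n) : ℝ :=
  ∑ α, g x μ α * B x α

/-- Weyl connection
`W^σ_{μν} = Γ^σ_{μν}(g) + (1/2)(δ^σ_ν B_μ + δ^σ_μ B_ν - g_{μν} B^σ)`. -/
noncomputable def weyl {n : ℕ}
    (g : (Fin n → ℝ) → Matrix (Fin n) (Fin n) ℝ)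
    (B : (Fin n → ℝ) → Fin n → ℝ)
    (x : Fin n → ℝ) (σ μ ν : Fin n) : ℝ :=
  christoffel g x σ μ ν +
    (1 / 2) * ((if σ = ν then lowerIdx g B x μ else 0)
      + (if σ = μ then lowerIdx g B x ν else 0) - g x μ ν * B x σ)

/-- Levi-Civita covariant divergence `D_α B^α`. -/
noncomputable def covDiv {n : ℕ}
    (g : (Fin n → ℝ) → Matrix (Fin n) (Fin n) ℝ)
    (B : (Fin n → ℝ) → Fin n → ℝ) (x : Fin n → ℝ) : ℝ :=
  ∑ α, pd (fun y => B y α) α x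
    + ∑ α, ∑ β, christoffel g x α β α * B x β

lemma pd_add' {n : ℕ} {f h : (Fin n → ℝ) → ℝ} {x : Fin n → ℝ} {μ : Fin n}
    (hf : Differentiable ℝ f) (hh : Differentiable ℝ h) :
    pd (fun y => f y + h y) μ x = pd f μ x + pd h μ x := by
  simp only [pd]
  rw [fderiv_fun_add (hf x) (hh x)]; rfl

lemma pd_sub' {n : ℕ} {f h : (Fin n → ℝ) → ℝ} {x : Fin n → ℝ} {μ : Fin n}
    (hf : Differentiable ℝ f) (hh : Differentiable ℝ h) :
    pd (fun y => f y - h y) μ x = pd f μ x - pd h μ x := by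
  simp only [pd]
  rw [fderiv_fun_sub (hf x) (hh x)]; rfl

lemma pd_neg' {n : ℕ} {f : (Fin n → ℝ) → ℝ} {x : Fin n → ℝ} {μ : Fin n} :
    pd (fun y => - f y) μ x = - pd f μ x := by
  simp only [pd]
  rw [fderiv_fun_neg]; rfl

lemma pd_mul' {n : ℕ} {f h : (Fin n → ℝ) → ℝ} {x : Fin n → ℝ} {μ : Fin n}
    (hf : Differentiable ℝ f) (hh : Differentiable ℝ h) :
    pd (fun y => f y * h y) μ x = f x * pd h μ x + pd f μ x * h x := by
  simp only [pd]
  rw [fderiv_fun_mul (hf x) (hh x)]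
  simp [mul_comm]

lemma pd_const' {n : ℕ} {c : ℝ} {x : Fin n → ℝ} {μ : Fin n} :
    pd (fun _ => c) μ x = 0 := by
  simp [pd]

lemma pd_inv' {n : ℕ} {f : (Fin n → ℝ) → ℝ} {x : Fin n → ℝ} {μ : Fin n}
    (hf : Differentiable ℝ f) (h0 : ∀ y, f y ≠ 0) :
    pd (fun y => (f y)⁻¹) μ x = - pd f μ x * ((f x)⁻¹) ^ 2 := by
  simp only [pd]
  have := ((hasDerivAt_inv (h0 x)).comp_hasFDerivAt x (hf x).hasFDerivAt).fderiv
  have e : ((fun y : ℝ => y⁻¹) ∘ f) = fun y => (f y)⁻¹ := rfl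
  rw [e] at this
  rw [this]
  simp
  ring

lemma pd_smooth {n : ℕ} {f : (Fin n → ℝ) → ℝ} (hf : ContDiff ℝ (⊤ : ℕ∞) f) (μ : Fin n) :
    ContDiff ℝ (⊤ : ℕ∞) (fun y => pd f μ y) := by
  unfold pd
  exact (hf.fderiv_right (by simp)).clm_apply contDiff_const

lemma pd_comm' {n : ℕ} {f : (Fin n → ℝ) → ℝ} (hf : ContDiff ℝ (⊤ : ℕ∞) f) (μ ν : Fin n)
    (x : Fin n → ℝ) :
    pd (fun y => pd f μ y) ν x = pd (fun y => pd f ν y) μ x := by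
  have hd : Differentiable ℝ (fderiv ℝ f) :=
    (hf.fderiv_right (m := (⊤ : ℕ∞)) (by simp)).differentiable (by simp)
  have key : ∀ a b : Fin n, pd (fun y => pd f a y) b x
      = fderiv ℝ (fderiv ℝ f) x (Pi.single b 1) (Pi.single a 1) := by
    intro a b
    simp only [pd]
    rw [fderiv_clm_apply (hd x) (differentiableAt_const _)]
    simp
  rw [key, key]
  exact (hf.contDiffAt.isSymmSndFDerivAt (by simpa using (WithTop.coe_le_coe.2 le_top : ((2 : ℕ∞) : WithTop ℕ∞) ≤ ((⊤ : ℕ∞) : WithTop ℕ∞)))) _ _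

lemma diff_of_smooth {n : ℕ} {f : (Fin n → ℝ) → ℝ} (hf : ContDiff ℝ (⊤ : ℕ∞) f) :
    Differentiable ℝ f := hf.differentiable (by simp)

/-- Entries of the inverse of a symmetric two-dimensional matrix. -/
lemma inv_entries (A : Matrix (Fin 2) (Fin 2) ℝ) (hs : A.IsSymm) :
    A⁻¹ 0 0 = (A 0 0 * A 1 1 - A 0 1 ^ 2)⁻¹ * A 1 1 ∧
    A⁻¹ 0 1 = (A 0 0 * A 1 1 - A 0 1 ^ 2)⁻¹ * (- A 0 1) ∧
    A⁻¹ 1 0 = (A 0 0 * A 1 1 - A 0 1 ^ 2)⁻¹ * (- A 0 1) ∧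
    A⁻¹ 1 1 = (A 0 0 * A 1 1 - A 0 1 ^ 2)⁻¹ * A 0 0 := by
  have h : A 1 0 = A 0 1 := hs.apply 0 1
  simp [Matrix.inv_def, Matrix.adjugate_fin_two, Matrix.det_fin_two, h, pow_two]

/-- The Gauss curvature (Brioschi formula). -/
noncomputable def brioschi (D E F G Eu Ev Fu Fv Gu Gv Evv Fuv Guu : ℝ) : ℝ :=
  ((-(1/2) * Evv + Fuv - (1/2) * Guu) * (E * G - F ^ 2)
    - (1/2) * Eu * ((Fv - (1/2) * Gu) * G - F * ((1/2) * Gv))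
    + (Fu - (1/2) * Ev) * ((Fv - (1/2) * Gu) * F - E * ((1/2) * Gv))
    + (1/2) * Ev * ((1/2) * Ev * G - F * ((1/2) * Gu))
    - (1/2) * Gu * ((1/2) * Ev * F - E * ((1/2) * Gu))) * D ^ 2

lemma ricci_lc (g : (Fin 2 → ℝ) → Matrix (Fin 2) (Fin 2) ℝ)
    (hg_smooth : ∀ μ ν : Fin 2, ContDiff ℝ (⊤ : ℕ∞) fun y => g y μ ν)
    (hg_symm : ∀ y, (g y).IsSymm)
    (hg_det : ∀ y, IsUnit (g y).det) (x : Fin 2 → ℝ) :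
    ∃ K : ℝ, ∀ μ ν, ricci (christoffel g) x μ ν = K * g x μ ν := by
  obtain ⟨E, hE⟩ : ∃ E : (Fin 2 → ℝ) → ℝ, E = fun y => g y 0 0 := ⟨_, rfl⟩
  obtain ⟨F, hF⟩ : ∃ E : (Fin 2 → ℝ) → ℝ, E = fun y => g y 0 1 := ⟨_, rfl⟩
  obtain ⟨G, hG⟩ : ∃ E : (Fin 2 → ℝ) → ℝ, E = fun y => g y 1 1 := ⟨_, rfl⟩
  have hEs : ContDiff ℝ (⊤ : ℕ∞) E := hE ▸ hg_smooth 0 0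
  have hFs : ContDiff ℝ (⊤ : ℕ∞) F := hF ▸ hg_smooth 0 1
  have hGs : ContDiff ℝ (⊤ : ℕ∞) G := hG ▸ hg_smooth 1 1
  have e00 : ∀ y, g y 0 0 = E y := fun y => by rw [hE]
  have e01 : ∀ y, g y 0 1 = F y := fun y => by rw [hF]
  have e10 : ∀ y, g y 1 0 = F y := fun y => by rw [hF]; exact (hg_symm y).apply 0 1
  have e11 : ∀ y, g y 1 1 = G y := fun y => by rw [hG]
  have hdet : ∀ y, E y * G y - F y * F y ≠ 0 := fun y => by
    have := (hg_det y).ne_zero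
    rwa [Matrix.det_fin_two, e00, e01, e10, e11] at this
  obtain ⟨D, hD⟩ : ∃ D : (Fin 2 → ℝ) → ℝ, D = fun y => (E y * G y - F y * F y)⁻¹ := ⟨_, rfl⟩
  have dE := diff_of_smooth hEs
  have dF := diff_of_smooth hFs
  have dG := diff_of_smooth hGs
  have dD : Differentiable ℝ D := by
    rw [hD]
    exact Differentiable.inv (by fun_prop) hdet
  have pD : ∀ μ, pd D μ x = - (E x * pd G μ x + pd E μ x * G x
      - (F x * pd F μ x + pd F μ x * F x)) * D x ^ 2 := by
    intro μ
    rw [hD]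
    rw [pd_inv' (by fun_prop) hdet, pd_sub' (by fun_prop) (by fun_prop),
      pd_mul' dE dG, pd_mul' dF dF]
  have i00 : ∀ y, (g y)⁻¹ 0 0 = D y * G y := fun y => by
    rw [(inv_entries _ (hg_symm y)).1, e00, e01, e11, hD, pow_two]
  have i01 : ∀ y, (g y)⁻¹ 0 1 = D y * (- F y) := fun y => by
    rw [(inv_entries _ (hg_symm y)).2.1, e00, e01, e11, hD, pow_two]
  have i10 : ∀ y, (g y)⁻¹ 1 0 = D y * (- F y) := fun y => by
    rw [(inv_entries _ (hg_symm y)).2.2.1, e00, e01, e11, hD, pow_two]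
  have i11 : ∀ y, (g y)⁻¹ 1 1 = D y * E y := fun y => by
    rw [(inv_entries _ (hg_symm y)).2.2.2, e00, e01, e11, hD, pow_two]
  have dEp : ∀ μ, Differentiable ℝ (fun y => pd E μ y) :=
    fun μ => diff_of_smooth (pd_smooth hEs μ)
  have dFp : ∀ μ, Differentiable ℝ (fun y => pd F μ y) :=
    fun μ => diff_of_smooth (pd_smooth hFs μ)
  have dGp : ∀ μ, Differentiable ℝ (fun y => pd G μ y) :=
    fun μ => diff_of_smooth (pd_smooth hGs μ)
  have cE := pd_comm' hEs 0 1 x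
  have cF := pd_comm' hFs 0 1 x
  have cG := pd_comm' hGs 0 1 x
  -- Christoffel symbols
  have hΓ : ∀ y σ μ ν, christoffel g y σ μ ν = (1/2) *
      ((g y)⁻¹ σ 0 * (pd (fun y => g y ν 0) μ y + pd (fun y => g y μ 0) ν y
      - pd (fun y => g y μ ν) 0 y) + (g y)⁻¹ σ 1 * (pd (fun y => g y ν 1) μ y
      + pd (fun y => g y μ 1) ν y - pd (fun y => g y μ ν) 1 y)) := by
    intro y σ μ ν
    simp [christoffel, Fin.sum_univ_two]
  -- product rule for one term
  have T : ∀ (p q a b c d e f : (Fin 2 → ℝ) → ℝ) (μ : Fin 2), Differentiable ℝ p →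
      Differentiable ℝ q → Differentiable ℝ a → Differentiable ℝ b → Differentiable ℝ c →
      Differentiable ℝ d → Differentiable ℝ e → Differentiable ℝ f →
      pd (fun y => (1/2) * (D y * p y * (a y + b y - c y) + D y * q y * (d y + e y - f y))) μ x
      = (1/2) * (pd D μ x * (p x * (a x + b x - c x) + q x * (d x + e x - f x))
        + D x * (pd p μ x * (a x + b x - c x) + pd q μ x * (d x + e x - f x)
         + p x * (pd a μ x + pd b μ x - pd c μ x) + q x * (pd d μ x + pd e μ x - pd f μ x))) := by
    intro p q a b c d e f μ hp hq ha hb hc hd he hf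
    rw [pd_mul' (by fun_prop) (by fun_prop), pd_const', pd_add' (by fun_prop) (by fun_prop),
      pd_mul' (by fun_prop) (by fun_prop), pd_mul' (by fun_prop) (by fun_prop),
      pd_mul' (by fun_prop) (by fun_prop), pd_mul' (by fun_prop) (by fun_prop),
      pd_sub' (by fun_prop) (by fun_prop), pd_sub' (by fun_prop) (by fun_prop),
      pd_add' (by fun_prop) (by fun_prop), pd_add' (by fun_prop) (by fun_prop)]
    ring
  have dFn : Differentiable ℝ (fun y => - F y) := by fun_prop
  have hDx : D x = (E x * G x - F x * F x)⁻¹ := by rw [hD]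
  have hdx : E x * G x - F x ^ 2 ≠ 0 := by rw [pow_two]; exact hdet x
  refine ⟨brioschi (D x) (E x) (F x) (G x) (pd E 0 x) (pd E 1 x) (pd F 0 x) (pd F 1 x)
    (pd G 0 x) (pd G 1 x) (pd (fun y => pd E 1 y) 1 x) (pd (fun y => pd F 1 y) 0 x)
    (pd (fun y => pd G 0 y) 0 x), ?_⟩
  have hT0 : ∀ (μ ν κ : Fin 2) , pd (fun y => christoffel g y 0 μ ν) κ x = 
    pd (fun y => (1/2) *
      (D y * G y * (pd (fun y => g y ν 0) μ y + pd (fun y => g y μ 0) ν y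
      - pd (fun y => g y μ ν) 0 y) + D y * (- F y) * (pd (fun y => g y ν 1) μ y
      + pd (fun y => g y μ 1) ν y - pd (fun y => g y μ ν) 1 y))) κ x := by
    intro μ ν κ; simp only [hΓ, i00, i01]
  have hT1 : ∀ (μ ν κ : Fin 2) , pd (fun y => christoffel g y 1 μ ν) κ x = 
    pd (fun y => (1/2) *
      (D y * (- F y) * (pd (fun y => g y ν 0) μ y + pd (fun y => g y μ 0) ν y
      - pd (fun y => g y μ ν) 0 y) + D y * E y * (pd (fun y => g y ν 1) μ y
      + pd (fun y => g y μ 1) ν y - pd (fun y => g y μ ν) 1 y))) κ x := by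
    intro μ ν κ; simp only [hΓ, i10, i11]
  have gp : ∀ a b c, Differentiable ℝ (fun y => pd (fun y => g y a b) c y) :=
    fun a b c => diff_of_smooth (pd_smooth (hg_smooth a b) c)
  have hT0' := fun (μ ν κ : Fin 2) => (hT0 μ ν κ).trans
    (T G (fun y => - F y) _ _ _ _ _ _ κ dG dFn (gp ν 0 μ) (gp μ 0 ν) (gp μ ν 0) (gp ν 1 μ)
      (gp μ 1 ν) (gp μ ν 1))
  have hT1' := fun (μ ν κ : Fin 2) => (hT1 μ ν κ).trans
    (T (fun y => - F y) E _ _ _ _ _ _ κ dFn dE (gp ν 0 μ) (gp μ 0 ν) (gp μ ν 0) (gp ν 1 μ)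
      (gp μ 1 ν) (gp μ ν 1))
  have eta : ∀ f : (Fin 2 → ℝ) → ℝ, (fun y => f y) = f := fun f => rfl
  intro μ ν
  fin_cases μ <;> fin_cases ν <;>
  · simp only [ricci, Fin.sum_univ_two, Fin.zero_eta, Fin.mk_one, Fin.isValue, hT0', hT1']
    simp only [hΓ, i00, i01, i10, i11, e00, e01, e10, e11, pd_neg', eta, pD]
    simp only [eta] at cE cF cG
    simp only [brioschi, cE, cF, cG, hDx]
    rw [← pow_two (F x)]
    field_simp
    ring

lemma christoffel_symm {n : ℕ} (g : (Fin n → ℝ) → Matrix (Fin n) (Fin n) ℝ)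
    (hg_symm : ∀ y, (g y).IsSymm) (x : Fin n → ℝ) (σ μ ν : Fin n) :
    christoffel g x σ μ ν = christoffel g x σ ν μ := by
  unfold christoffel
  have : (fun y => g y μ ν) = fun y => g y ν μ := by
    funext y; exact (hg_symm y).apply ν μ
  rw [this]
  congr 1
  refine Finset.sum_congr rfl fun α _ => ?_
  ring

lemma metric_compat (g : (Fin 2 → ℝ) → Matrix (Fin 2) (Fin 2) ℝ)
    (hg_symm : ∀ y, (g y).IsSymm) (hg_det : ∀ y, IsUnit (g y).det) (x : Fin 2 → ℝ)
    (κ μ ν : Fin 2) :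
    pd (fun y => g y μ ν) κ x = ∑ α, (christoffel g x α κ μ * g x α ν
      + christoffel g x α κ ν * g x α μ) := by
  have e10 : ∀ y, g y 1 0 = g y 0 1 := fun y => (hg_symm y).apply 0 1
  have hdet : g x 0 0 * g x 1 1 - g x 0 1 ^ 2 ≠ 0 := by
    have := (hg_det x).ne_zero
    rwa [Matrix.det_fin_two, e10, ← pow_two] at this
  obtain ⟨i00, i01, i10, i11⟩ := inv_entries _ (hg_symm x)
  fin_cases κ <;> fin_cases μ <;> fin_cases ν <;>
  · simp only [christoffel, Fin.sum_univ_two, Fin.zero_eta, Fin.mk_one, Fin.isValue,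
      i00, i01, i10, i11, e10]
    field_simp
    ring

lemma diff_aux {p q a b c d e f : (Fin 2 → ℝ) → ℝ} (hp : Differentiable ℝ p)
    (hq : Differentiable ℝ q) (ha : Differentiable ℝ a) (hb : Differentiable ℝ b)
    (hc : Differentiable ℝ c) (hd : Differentiable ℝ d) (he : Differentiable ℝ e)
    (hf : Differentiable ℝ f) : Differentiable ℝ (fun y => (1 / 2) *
      (p y * (a y + b y - c y) + q y * (d y + e y - f y))) := by
  fun_prop

lemma pd_aux1 {a b c d : (Fin 2 → ℝ) → ℝ} (ha : Differentiable ℝ a) (hb : Differentiable ℝ b)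
    (hc : Differentiable ℝ c) (hd : Differentiable ℝ d) (κ : Fin 2) (x : Fin 2 → ℝ) :
    pd (fun y => a y * b y + c y * d y) κ x
      = a x * pd b κ x + pd a κ x * b x + (c x * pd d κ x + pd c κ x * d x) := by
  rw [pd_add' (by fun_prop) (by fun_prop), pd_mul' ha hb, pd_mul' hc hd]

lemma pd_aux2 {w a b c d : (Fin 2 → ℝ) → ℝ} (hw : Differentiable ℝ w)
    (ha : Differentiable ℝ a) (hb : Differentiable ℝ b)
    (hc : Differentiable ℝ c) (hd : Differentiable ℝ d) (κ : Fin 2) (x : Fin 2 → ℝ) :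
    pd (fun y => w y + (1 / 2) * (a y + b y - c y * d y)) κ x
      = pd w κ x + (1 / 2) * (pd a κ x + pd b κ x - (c x * pd d κ x + pd c κ x * d x)) := by
  rw [pd_add' (by fun_prop) (by fun_prop), pd_mul' (by fun_prop) (by fun_prop), pd_const',
    pd_sub' (by fun_prop) (by fun_prop), pd_add' ha hb, pd_mul' hc hd]
  ring

lemma christoffel_diff (g : (Fin 2 → ℝ) → Matrix (Fin 2) (Fin 2) ℝ)
    (hg_smooth : ∀ μ ν : Fin 2, ContDiff ℝ (⊤ : ℕ∞) fun y => g y μ ν)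
    (hg_det : ∀ y, IsUnit (g y).det) (σ μ ν : Fin 2) :
    Differentiable ℝ (fun y => christoffel g y σ μ ν) := by
  have gp : ∀ a b c, Differentiable ℝ (fun y => pd (fun y => g y a b) c y) :=
    fun a b c => diff_of_smooth (pd_smooth (hg_smooth a b) c)
  have gd : ∀ a b, Differentiable ℝ (fun y => g y a b) :=
    fun a b => diff_of_smooth (hg_smooth a b)
  have hd : Differentiable ℝ (fun y => ((g y).det)⁻¹) := by
    refine Differentiable.inv ?_ fun y => (hg_det y).ne_zero
    simp only [Matrix.det_fin_two]
    exact ((gd 0 0).mul (gd 1 1)).sub ((gd 0 1).mul (gd 1 0))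
  have hi : ∀ a b, Differentiable ℝ (fun y => (g y)⁻¹ a b) := by
    intro a b
    have h : ∀ y, (g y)⁻¹ a b = ((g y).det)⁻¹ * (g y).adjugate a b := fun y => by
      simp [Matrix.inv_def]
    simp only [h]
    refine hd.mul ?_
    have h00 := gd 0 0
    have h01 := (gd 0 1).neg
    have h10 := (gd 1 0).neg
    have h11 := gd 1 1
    simp only [Matrix.adjugate_fin_two]
    fin_cases a <;> fin_cases b
    · exact h11
    · exact h01
    · exact h10
    · exact h00
  simp only [christoffel, Fin.sum_univ_two]
  exact diff_aux (hi σ 0) (hi σ 1) (gp ν 0 μ) (gp μ 0 ν) (gp μ ν 0) (gp ν 1 μ) (gp μ 1 ν)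
    (gp μ ν 1)

lemma ricciSym_weyl (g : (Fin 2 → ℝ) → Matrix (Fin 2) (Fin 2) ℝ)
    (hg_smooth : ∀ μ ν : Fin 2, ContDiff ℝ (⊤ : ℕ∞) fun y => g y μ ν)
    (hg_symm : ∀ y, (g y).IsSymm)
    (hg_det : ∀ y, IsUnit (g y).det)
    (B : (Fin 2 → ℝ) → Fin 2 → ℝ)
    (hB : ∀ α : Fin 2, ContDiff ℝ (⊤ : ℕ∞) fun y => B y α) (x : Fin 2 → ℝ) (μ ν : Fin 2) :
    ricciSym (weyl g B) x μ ν
        = ricciSym (christoffel g) x μ ν - (1 / 2) * covDiv g B x * g x μ ν := by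
  have dB : ∀ a, Differentiable ℝ (fun y => B y a) := fun a => diff_of_smooth (hB a)
  have gd : ∀ a b, Differentiable ℝ (fun y => g y a b) :=
    fun a b => diff_of_smooth (hg_smooth a b)
  have cd := christoffel_diff g hg_smooth hg_det
  have mc := metric_compat g hg_symm hg_det x
  have pl : ∀ a κ, pd (fun y => lowerIdx g B y a) κ x = g x a 0 * pd (fun y => B y 0) κ x
      + pd (fun y => g y a 0) κ x * B x 0 + (g x a 1 * pd (fun y => B y 1) κ x
      + pd (fun y => g y a 1) κ x * B x 1) := by
    intro a κ
    simp only [lowerIdx, Fin.sum_univ_two]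
    exact pd_aux1 (gd a 0) (dB 0) (gd a 1) (dB 1) κ x
  have dl : ∀ a, Differentiable ℝ (fun y => lowerIdx g B y a) := by
    intro a
    simp only [lowerIdx, Fin.sum_univ_two]
    exact ((gd a 0).mul (dB 0)).add ((gd a 1).mul (dB 1))
  have pw : ∀ σ a b κ, pd (fun y => weyl g B y σ a b) κ x
      = pd (fun y => christoffel g y σ a b) κ x + (1 / 2) *
        ((if σ = b then pd (fun y => lowerIdx g B y a) κ x else 0)
        + (if σ = a then pd (fun y => lowerIdx g B y b) κ x else 0)
        - (g x a b * pd (fun y => B y σ) κ x + pd (fun y => g y a b) κ x * B x σ)) := by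
    intro σ a b κ
    have d1 : Differentiable ℝ (fun y => if σ = b then lowerIdx g B y a else 0) := by
      split_ifs
      · exact dl a
      · exact differentiable_const _
    have d2 : Differentiable ℝ (fun y => if σ = a then lowerIdx g B y b else 0) := by
      split_ifs
      · exact dl b
      · exact differentiable_const _
    refine (pd_aux2 (cd σ a b) d1 d2 (gd a b) (dB σ) κ x).trans ?_
    split_ifs <;> simp [pd_const']
  have e10 : ∀ y, g y 1 0 = g y 0 1 := fun y => (hg_symm y).apply 0 1
  have s10 : ∀ y σ, christoffel g y σ 1 0 = christoffel g y σ 0 1 :=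
    fun y σ => christoffel_symm g hg_symm y σ 1 0
  simp only [Fin.sum_univ_two] at mc
  fin_cases μ <;> fin_cases ν <;>
  · simp only [ricciSym, ricci, covDiv, Fin.sum_univ_two, Fin.zero_eta, Fin.mk_one,
      Fin.isValue, pw, pl]
    simp only [weyl, mc, lowerIdx, Fin.sum_univ_two, Fin.isValue, s10, e10, if_true,
      zero_ne_one, one_ne_zero, if_false]
    ring

lemma trace_two (g : (Fin 2 → ℝ) → Matrix (Fin 2) (Fin 2) ℝ)
    (hg_symm : ∀ y, (g y).IsSymm) (hg_det : ∀ y, IsUnit (g y).det) (x : Fin 2 → ℝ) :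
    ∑ μ, ∑ ν, (g x)⁻¹ μ ν * g x μ ν = 2 := by
  have e10 : g x 1 0 = g x 0 1 := (hg_symm x).apply 0 1
  have hdet : g x 0 0 * g x 1 1 - g x 0 1 ^ 2 ≠ 0 := by
    have := (hg_det x).ne_zero
    rwa [Matrix.det_fin_two, e10, ← pow_two] at this
  obtain ⟨i00, i01, i10, i11⟩ := inv_entries _ (hg_symm x)
  simp only [Fin.sum_univ_two, i00, i01, i10, i11, e10]
  field_simp
  ring

/-- In dimension 2 the symmetrized Ricci tensor of the Weyl connection
`W(g,B)` equals `(1/2)(R(g) - D_α B^α) g_{μν}`; consequently the tensor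
`R_{(μν)}(W) - (1/2) 𝓡 g_{μν}` vanishes identically, where
`𝓡 = g^{μν} R_{(μν)}(W) = R(g) - D_α B^α`. -/
theorem weyl_connection_ricci_two_dim
    (g : (Fin 2 → ℝ) → Matrix (Fin 2) (Fin 2) ℝ)
    (hg_smooth : ∀ μ ν : Fin 2, ContDiff ℝ (⊤ : ℕ∞) fun y => g y μ ν)
    (hg_symm : ∀ y, (g y).IsSymm)
    (hg_det : ∀ y, IsUnit (g y).det)
    (B : (Fin 2 → ℝ) → Fin 2 → ℝ)
    (hB : ∀ α : Fin 2, ContDiff ℝ (⊤ : ℕ∞) fun y => B y α) :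
    (∀ (x : Fin 2 → ℝ) (μ ν : Fin 2),
      ricciSym (weyl g B) x μ ν
        = (1 / 2) * (scalarCurv g x - covDiv g B x) * g x μ ν) ∧
    (∀ x : Fin 2 → ℝ,
      ∑ μ, ∑ ν, (g x)⁻¹ μ ν * ricciSym (weyl g B) x μ ν
        = scalarCurv g x - covDiv g B x) ∧
    (∀ (x : Fin 2 → ℝ) (μ ν : Fin 2),
      ricciSym (weyl g B) x μ ν
        - (1 / 2) * (∑ ρ, ∑ τ, (g x)⁻¹ ρ τ * ricciSym (weyl g B) x ρ τ)
          * g x μ ν = 0) := by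
  have h1 : ∀ (x : Fin 2 → ℝ) (μ ν : Fin 2),
      ricciSym (weyl g B) x μ ν
        = (1 / 2) * (scalarCurv g x - covDiv g B x) * g x μ ν := by
    intro x μ ν
    obtain ⟨K, hK⟩ := ricci_lc g hg_smooth hg_symm hg_det x
    rw [ricciSym_weyl g hg_smooth hg_symm hg_det B hB]
    have hs : scalarCurv g x = 2 * K := by
      simp only [scalarCurv, hK]
      have ht := trace_two g hg_symm hg_det x
      simp only [Fin.sum_univ_two] at ht ⊢
      linear_combination K * ht
    rw [hs, ricciSym, hK, hK, (hg_symm x).apply μ ν]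
    ring
  have h2 : ∀ x : Fin 2 → ℝ,
      ∑ μ, ∑ ν, (g x)⁻¹ μ ν * ricciSym (weyl g B) x μ ν
        = scalarCurv g x - covDiv g B x := by
    intro x
    simp only [h1]
    have := trace_two g hg_symm hg_det x
    simp only [Fin.sum_univ_two] at this ⊢
    linear_combination (1 / 2) * (scalarCurv g x - covDiv g B x) * this
  refine ⟨h1, h2, fun x μ ν => ?_⟩
  rw [h2, h1, sub_self]
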